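/- arXiv:1901.05396 — 2 statements merged into one kernel-verified Lean document; each statement's English description precedes it below -/
import Mathlib

section
/- Let (X,𝒰) be a uniform space, B ⊆ X, n ∈ ℕ, and let U be a symmetric entourage. If the set X \ Uⁿ[B] is uniformly discrete, then the set X \ Uⁿ⁺¹[B] is uniformly isolated. -/
/-- A relation is symmetric: `(x,y) ∈ U ↔ (y,x) ∈ U`. -/
def SymmRel {X : Type*} (U : Set (X × X)) : Prop :=
  ∀ x y : X, (x, y) ∈ U ↔ (y, x) ∈ U

/-- The image `U[A] = ⋃ x ∈ A, U[x]` of a set under a relation. -/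
def relImage {X : Type*} (U : Set (X × X)) (A : Set X) : Set X :=
  ⋃ x ∈ A, UniformSpace.ball x U

/-- `relIter U n` is the `(n+1)`-fold composition `Uⁿ⁺¹ = U ∘ ⋯ ∘ U`;
so as `n` ranges over `ℕ`, all positive powers `Uⁿ` occur. -/
def relIter {X : Type*} (U : Set (X × X)) : ℕ → Set (X × X)
  | 0 => U
  | n + 1 => SetRel.comp U (relIter U n)

/-- `A` is uniformly isolated: there is an entourage `V` with `V[x] = {x}` for all `x ∈ A`. -/
def UnifIsolated {X : Type*} [UniformSpace X] (A : Set X) : Prop :=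
  ∃ V ∈ uniformity X, ∀ x ∈ A, UniformSpace.ball x V = {x}

/-- `A` is uniformly discrete: there is an entourage `V` with `V[x] ∩ A = {x}`
for all `x ∈ A`. -/
def UnifDiscrete {X : Type*} [UniformSpace X] (A : Set X) : Prop :=
  ∃ V ∈ uniformity X, ∀ x ∈ A, UniformSpace.ball x V ∩ A = {x}

theorem relIter_snoc {X : Type*} (U : Set (X × X)) (n : ℕ) (a y x : X)
    (h : (a, y) ∈ relIter U n) (h' : (y, x) ∈ U) : (a, x) ∈ relIter U (n + 1) := by
  induction n generalizing a with
  | zero => exact ⟨y, h, h'⟩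
  | succ n ih =>
    obtain ⟨z, hz, hzy⟩ := h
    exact ⟨z, hz, ih z hzy⟩

theorem stmt7 {X : Type*} [UniformSpace X] (B : Set X) (n : ℕ)
    (U : Set (X × X)) (hU : U ∈ uniformity X) (hsymm : SymmRel U)
    (hd : UnifDiscrete (Set.univ \ relImage (relIter U n) B)) :
    UnifIsolated (Set.univ \ relImage (relIter U (n + 1)) B) := by
  obtain ⟨V, hV, hVd⟩ := hd
  have key : ∀ x, x ∈ Set.univ \ relImage (relIter U (n + 1)) B →
      ∀ y, (y = x ∨ (x, y) ∈ U) → y ∈ Set.univ \ relImage (relIter U n) B := by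
    intro x hx y hxy
    refine ⟨trivial, fun hy => hx.2 ?_⟩
    simp only [relImage, Set.mem_iUnion] at hy ⊢
    obtain ⟨b, hb, hby⟩ := hy
    refine ⟨b, hb, relIter_snoc U n b y x hby ?_⟩
    rcases hxy with rfl | h
    · exact refl_mem_uniformity hU
    · exact (hsymm x y).1 h
  refine ⟨V ∩ U, Filter.inter_mem hV hU, fun x hx => ?_⟩
  have h := hVd x (key x hx x (Or.inl rfl))
  apply Set.eq_singleton_iff_unique_mem.2
  refine ⟨⟨refl_mem_uniformity hV, refl_mem_uniformity hU⟩, fun y hy => ?_⟩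
  have : y ∈ UniformSpace.ball x V ∩ (Set.univ \ relImage (relIter U n) B) :=
    ⟨hy.1, key x hx y (Or.inr hy.2)⟩
  rw [h] at this
  exact this
end

section
/- Let (X,𝒰) be a uniform space such that for each symmetric entourage U ∈ 𝒰 there exist a Bourbaki bounded set B ⊆ X and n ∈ ℕ with X \ Uⁿ[B] uniformly isolated. Then for every uniformly continuous function f : X → ℝ there exists k ≥ 0 such that the set {x ∈ X : |f(x)| ≥ k} is uniformly isolated. -/
/-- `A` is Bourbaki bounded in `X`: every uniformly continuous real-valued
function on `X` is bounded on `A`. -/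
def BourbakiBounded {X : Type*} [UniformSpace X] (A : Set X) : Prop :=
  ∀ f : X → ℝ, UniformContinuous f → ∃ M : ℝ, ∀ x ∈ A, |f x| ≤ M

theorem stmt8 {X : Type*} [UniformSpace X]
    (h : ∀ U ∈ uniformity X, SymmRel U →
      ∃ (B : Set X) (n : ℕ), BourbakiBounded B ∧
        UnifIsolated (Set.univ \ relImage (relIter U n) B)) :
    ∀ f : X → ℝ, UniformContinuous f →
      ∃ k : ℝ, 0 ≤ k ∧ UnifIsolated {x : X | k ≤ |f x|} := by
  intro f hf
  have hU : {p : X × X | |f p.1 - f p.2| < 1} ∈ uniformity X := by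
    have h1 := hf (Metric.dist_mem_uniformity (one_pos))
    simpa [Real.dist_eq] using h1
  obtain ⟨B, n, hB, V, hV, hiso⟩ := h _ hU (by
    intro x y
    simp only [Set.mem_setOf_eq]
    rw [abs_sub_comm])
  obtain ⟨M, hM⟩ := hB f hf
  have key : ∀ n : ℕ, ∀ x y : X,
      (x, y) ∈ relIter {p : X × X | |f p.1 - f p.2| < 1} n → |f x - f y| < (n : ℝ) + 1 := by
    intro n
    induction n with
    | zero => intro x y hxy; simpa [relIter] using hxy
    | succ n ih =>
      intro x y hxy
      obtain ⟨z, hz1, hz2⟩ := hxy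
      have h2 := ih z y hz2
      have h1 : |f x - f z| < 1 := hz1
      have h3 := abs_sub_le (f x) (f z) (f y)
      push_cast
      linarith
  refine ⟨|M| + ((n : ℝ) + 1), by positivity, V, hV, fun x hx => hiso x ⟨trivial, fun hx' => ?_⟩⟩
  simp only [relImage, Set.mem_iUnion] at hx'
  obtain ⟨b, hb, hbx⟩ := hx'
  have h1 := key n b x hbx
  have h2 := hM b hb
  have h3 := le_abs_self M
  have h4 := abs_sub_abs_le_abs_sub (f x) (f b)
  rw [abs_sub_comm] at h4
  have h5 : |M| + ((n : ℝ) + 1) ≤ |f x| := hx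
  linarith
end
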